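/- Let p be a prime, S a commutative ring of characteristic p, and R = S[T, T₁₁, T₁₂, T₂₂] the polynomial ring in four variables. For ij ∈ {11, 12, 22} let D_ij : R → R be the S-linear operator D_ij(f) = (T_ij + 1)·∂f/∂T_ij. Define Θ₁(f) = T²·D₁₁(f) − T·D₁₂(f) + D₂₂(f), Θ₂(f) = 2T^{p+1}·D₁₁(f) − (T + T^p)·D₁₂(f) + 2·D₂₂(f), and for N ∈ ℤ, θ₄⁽ᴺ⁾(f) = (T − T^p)·∂f/∂T + N·f. Then for every N ∈ ℤ, Θ₁ ∘ θ₄⁽ᴺ⁾ − θ₄⁽ᴺ⁻²⁾ ∘ Θ₁ = Θ₂ as S-linear endomorphisms of R. -/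

import Mathlib

open MvPolynomial

/-- The operator `D_ij : f ↦ (T_ij + 1)·∂f/∂T_ij` on `S[T, T₁₁, T₁₂, T₂₂]`,
with the variables indexed by `Fin 4` as `0 ↦ T`, `1 ↦ T₁₁`, `2 ↦ T₁₂`, `3 ↦ T₂₂`. -/
noncomputable def Dij {S : Type*} [CommRing S] (i : Fin 4) (f : MvPolynomial (Fin 4) S) :
    MvPolynomial (Fin 4) S :=
  (X i + 1) * pderiv i f

/-- `Θ₁ f = T²·D₁₁ f − T·D₁₂ f + D₂₂ f`. -/
noncomputable def Theta1 {S : Type*} [CommRing S] (f : MvPolynomial (Fin 4) S) :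
    MvPolynomial (Fin 4) S :=
  X 0 ^ 2 * Dij 1 f - X 0 * Dij 2 f + Dij 3 f

/-- `Θ₂ f = 2T^{p+1}·D₁₁ f − (T + T^p)·D₁₂ f + 2·D₂₂ f`. -/
noncomputable def Theta2 {S : Type*} [CommRing S] (p : ℕ) (f : MvPolynomial (Fin 4) S) :
    MvPolynomial (Fin 4) S :=
  2 * X 0 ^ (p + 1) * Dij 1 f - (X 0 + X 0 ^ p) * Dij 2 f + 2 * Dij 3 f

/-- `Θ₃ f = T^{2p}·D₁₁ f − T^p·D₁₂ f + D₂₂ f`. -/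
noncomputable def Theta3 {S : Type*} [CommRing S] (p : ℕ) (f : MvPolynomial (Fin 4) S) :
    MvPolynomial (Fin 4) S :=
  X 0 ^ (2 * p) * Dij 1 f - X 0 ^ p * Dij 2 f + Dij 3 f

/-- `θ₄⁽ᴺ⁾ f = (T − T^p)·∂f/∂T + N·f`. -/
noncomputable def theta4 {S : Type*} [CommRing S] (p : ℕ) (N : ℤ) (f : MvPolynomial (Fin 4) S) :
    MvPolynomial (Fin 4) S :=
  (X 0 - X 0 ^ p) * pderiv 0 f + (N : MvPolynomial (Fin 4) S) * f

/-!
The operators `θ₄⁽ᴺ⁾` satisfy the weighted Leibniz rule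
`θ₄⁽ᴹ⁺ᴺ⁾(a b) = θ₄⁽ᴹ⁾(a) b + a θ₄⁽ᴺ⁾(b)`, and each commutes with `D₁₁`, `D₁₂`, `D₂₂`, which do not
involve `T`. Hence commuting an operator `Σ aᵢⱼ Dᵢⱼ` past `θ₄`, while the weight drops by `2`,
replaces every coefficient `aᵢⱼ` by `-θ₄⁽⁻²⁾(aᵢⱼ)`. The coefficients `T²`, `-T`, `1` of `Θ₁` become
the coefficients `2T^{p+1}`, `-(T + T^p)`, `2` of `Θ₂`.
-/

theorem pderiv_comm {R σ : Type*} [CommSemiring R] (i j : σ) (f : MvPolynomial σ R) :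
    pderiv i (pderiv j f) = pderiv j (pderiv i f) := by
  obtain rfl | hij := eq_or_ne i j
  · rfl
  · ext m
    simp only [coeff_pderiv, Finsupp.add_apply, Finsupp.single_eq_of_ne hij,
      Finsupp.single_eq_of_ne hij.symm, add_zero, add_right_comm m, mul_right_comm]

section Theta4

variable {S : Type*} [CommRing S] (p : ℕ)

theorem theta4_add (N : ℤ) (f g : MvPolynomial (Fin 4) S) :
    theta4 p N (f + g) = theta4 p N f + theta4 p N g := by
  simp only [theta4, map_add]
  ring

theorem theta4_sub (N : ℤ) (f g : MvPolynomial (Fin 4) S) :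
    theta4 p N (f - g) = theta4 p N f - theta4 p N g := by
  simp only [theta4, map_sub]
  ring

theorem theta4_mul (M N : ℤ) (f g : MvPolynomial (Fin 4) S) :
    theta4 p (M + N) (f * g) = theta4 p M f * g + f * theta4 p N g := by
  simp only [theta4, pderiv_mul, Int.cast_add]
  ring

theorem theta4_one (N : ℤ) : theta4 p N (1 : MvPolynomial (Fin 4) S) = N := by
  simp only [theta4, pderiv_one, mul_zero, zero_add, mul_one]

theorem theta4_X_zero (N : ℤ) :
    theta4 p N (X 0) = ((N : MvPolynomial (Fin 4) S) + 1) * X 0 - X 0 ^ p := by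
  simp only [theta4, pderiv_X_self]
  ring

theorem theta4_X_zero_sq (N : ℤ) :
    theta4 p N (X 0 ^ 2) = ((N : MvPolynomial (Fin 4) S) + 2) * X 0 ^ 2 - 2 * X 0 ^ (p + 1) := by
  simp only [theta4, pderiv_pow, pderiv_X_self]
  push_cast
  ring

theorem Dij_theta4 {i : Fin 4} (hi : i ≠ 0) (N : ℤ) (f : MvPolynomial (Fin 4) S) :
    Dij i (theta4 p N f) = theta4 p N (Dij i f) := by
  have hX : pderiv i (X 0 : MvPolynomial (Fin 4) S) = 0 := pderiv_X_of_ne hi.symm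
  have hX' : pderiv 0 (X i : MvPolynomial (Fin 4) S) = 0 := pderiv_X_of_ne hi
  simp only [Dij, theta4, map_add, map_sub, pderiv_mul, pderiv_pow, pderiv_one,
    Derivation.map_intCast, hX, hX', pderiv_comm i 0]
  ring

theorem mul_Dij_theta4_sub {i : Fin 4} (hi : i ≠ 0) (M N : ℤ) (a f : MvPolynomial (Fin 4) S) :
    a * Dij i (theta4 p N f) - theta4 p (M + N) (a * Dij i f) = -theta4 p M a * Dij i f := by
  rw [theta4_mul, Dij_theta4 p hi]
  ring

end Theta4

theorem stmt_11_general {S : Type*} [CommRing S] (p : ℕ) (N : ℤ) (f : MvPolynomial (Fin 4) S) :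
    Theta1 (theta4 p N f) - theta4 p (N - 2) (Theta1 f) = Theta2 p f := by
  rw [sub_eq_neg_add N 2]
  have h₁₁ : X 0 ^ 2 * Dij 1 (theta4 p N f) - theta4 p (-2 + N) (X 0 ^ 2 * Dij 1 f) =
      2 * X 0 ^ (p + 1) * Dij 1 f := by
    rw [mul_Dij_theta4_sub p (by decide), theta4_X_zero_sq]
    push_cast
    ring
  have h₁₂ : X 0 * Dij 2 (theta4 p N f) - theta4 p (-2 + N) (X 0 * Dij 2 f) =
      (X 0 + X 0 ^ p) * Dij 2 f := by
    rw [mul_Dij_theta4_sub p (by decide), theta4_X_zero]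
    push_cast
    ring
  have h₂₂ : Dij 3 (theta4 p N f) - theta4 p (-2 + N) (Dij 3 f) = 2 * Dij 3 f := by
    simpa [theta4_one] using mul_Dij_theta4_sub p (i := 3) (by decide) (-2) N 1 f
  simp only [Theta1, Theta2, theta4_add, theta4_sub]
  linear_combination h₁₁ - h₁₂ + h₂₂

/-- Let `p` be a prime and `S` a commutative ring of characteristic `p`.  Then for every
`N : ℤ`, `Θ₁ ∘ θ₄⁽ᴺ⁾ − θ₄⁽ᴺ⁻²⁾ ∘ Θ₁ = Θ₂` on `S[T, T₁₁, T₁₂, T₂₂]`. -/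
theorem stmt_11 (p : ℕ) (hp : p.Prime) (S : Type*) [CommRing S] [CharP S p]
    (N : ℤ) (f : MvPolynomial (Fin 4) S) :
    Theta1 (theta4 p N f) - theta4 p (N - 2) (Theta1 f) = Theta2 p f :=
  stmt_11_general p N f
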